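/- The binomial theorem for rising factorials with weights (generalized Chu–Vandermonde): for positive reals α, β, w, z and a natural number n, ∑_{k=0}^n C(n,k) (α)_k w^k (β)_{n-k} z^{n-k} = z^n (α+β)_n · ∑_{k=0}^n (-n)_k (α)_k (1 - w/z)^k / (k! (α+β)_k). -/

import Mathlib

/-! Write `w = x + z`. As functions of `(α, β)`, the weighted convolution
`∑ C(n,k) (α)_k (x + z)^k (β)_{n-k} z^{n-k}` and its expansion
`∑ C(n,k) (α)_k x^k (α+β+k)_{n-k} z^{n-k}` in powers of `x` both satisfy
`S_{n+1}(α, β) = α (x + z) S_n(α + 1, β) + β z S_n(α, β + 1)`, so they agree. Factoring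
`z^n (α+β)_n` out of the expansion turns its terms into those of `₂F₁(-n, α; α+β; 1 - w/z)`. -/

open Finset Polynomial

section CommSemiring

variable {R : Type*} [CommSemiring R]

theorem ascPochhammer_succ_eval_left (n : ℕ) (a : R) :
    (ascPochhammer R (n + 1)).eval a = a * (ascPochhammer R n).eval (a + 1) := by
  simp [ascPochhammer_succ_left, eval_comp]

theorem ascPochhammer_add_eval (m n : ℕ) (a : R) :
    (ascPochhammer R (m + n)).eval a =
      (ascPochhammer R m).eval a * (ascPochhammer R n).eval (a + m) := by
  simp [← ascPochhammer_mul, eval_comp]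

theorem mul_ascPochhammer_eval_add_one (n : ℕ) (a : R) :
    a * (ascPochhammer R n).eval (a + 1) = (ascPochhammer R n).eval a * (a + n) := by
  rw [← ascPochhammer_succ_eval_left, ascPochhammer_succ_eval]

theorem sum_choose_mul_ascPochhammer_mul_pow_succ (n : ℕ) (α β w z : R) :
    ∑ ij ∈ antidiagonal (n + 1), ((n + 1).choose ij.1 : R) *
        ((ascPochhammer R ij.1).eval α * w ^ ij.1 *
          ((ascPochhammer R ij.2).eval β * z ^ ij.2)) =
      α * w * ∑ ij ∈ antidiagonal n, (n.choose ij.1 : R) *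
        ((ascPochhammer R ij.1).eval (α + 1) * w ^ ij.1 *
          ((ascPochhammer R ij.2).eval β * z ^ ij.2)) +
      β * z * ∑ ij ∈ antidiagonal n, (n.choose ij.1 : R) *
        ((ascPochhammer R ij.1).eval α * w ^ ij.1 *
          ((ascPochhammer R ij.2).eval (β + 1) * z ^ ij.2)) := by
  rw [sum_antidiagonal_choose_succ_mul fun i j ↦
      (ascPochhammer R i).eval α * w ^ i * ((ascPochhammer R j).eval β * z ^ j),
    add_comm, mul_sum, mul_sum]
  congr 1 <;> refine sum_congr rfl fun ij hij ↦ ?_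
  · rw [← Nat.choose_symm_of_eq_add (mem_antidiagonal.mp hij).symm,
      ascPochhammer_succ_eval_left]
    ring
  · rw [ascPochhammer_succ_eval_left]
    ring

theorem sum_choose_mul_ascPochhammer_shift_mul_pow_succ (n : ℕ) (α β x z : R) :
    ∑ ij ∈ antidiagonal (n + 1), ((n + 1).choose ij.1 : R) *
        ((ascPochhammer R ij.1).eval α * x ^ ij.1 *
          ((ascPochhammer R ij.2).eval (α + β + ij.1) * z ^ ij.2)) =
      α * (x + z) * ∑ ij ∈ antidiagonal n, (n.choose ij.1 : R) *
        ((ascPochhammer R ij.1).eval (α + 1) * x ^ ij.1 *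
          ((ascPochhammer R ij.2).eval (α + 1 + β + ij.1) * z ^ ij.2)) +
      β * z * ∑ ij ∈ antidiagonal n, (n.choose ij.1 : R) *
        ((ascPochhammer R ij.1).eval α * x ^ ij.1 *
          ((ascPochhammer R ij.2).eval (α + (β + 1) + ij.1) * z ^ ij.2)) := by
  rw [sum_antidiagonal_choose_succ_mul fun i j ↦
      (ascPochhammer R i).eval α * x ^ i * ((ascPochhammer R j).eval (α + β + i) * z ^ j),
    mul_sum, mul_sum, ← sum_add_distrib, ← sum_add_distrib]
  refine sum_congr rfl fun ⟨i, j⟩ hij ↦ ?_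
  have hα : α + 1 + β + i = α + β + i + 1 := by ring
  have hβ : α + (β + 1) + i = α + β + i + 1 := by ring
  have hi : α + β + ((i + 1 : ℕ) : R) = α + β + i + 1 := by push_cast; ring
  simp only [← Nat.choose_symm_of_eq_add (mem_antidiagonal.mp hij).symm, hα, hβ, hi]
  set A := (ascPochhammer R j).eval (α + β + i + 1)
  set P := (ascPochhammer R i).eval α
  set Q := (ascPochhammer R i).eval (α + 1)
  have hPQ : α * Q = P * (α + i) := mul_ascPochhammer_eval_add_one i α
  rw [ascPochhammer_succ_eval_left j, ascPochhammer_succ_eval_left i]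
  calc (n.choose i : R) * (P * x ^ i * ((α + β + i) * A * z ^ (j + 1))) +
        n.choose i * (α * Q * x ^ (i + 1) * (A * z ^ j))
      = n.choose i * x ^ i * A * z ^ j * (P * (α + i) * z + β * z * P + α * Q * x) := by ring
    _ = α * (x + z) * (n.choose i * (Q * x ^ i * (A * z ^ j))) +
        β * z * (n.choose i * (P * x ^ i * (A * z ^ j))) := by rw [← hPQ]; ring

theorem sum_choose_mul_ascPochhammer_mul_add_pow (n : ℕ) (α β x z : R) :
    ∑ ij ∈ antidiagonal n, (n.choose ij.1 : R) *
        ((ascPochhammer R ij.1).eval α * (x + z) ^ ij.1 *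
          ((ascPochhammer R ij.2).eval β * z ^ ij.2)) =
      ∑ ij ∈ antidiagonal n, (n.choose ij.1 : R) *
        ((ascPochhammer R ij.1).eval α * x ^ ij.1 *
          ((ascPochhammer R ij.2).eval (α + β + ij.1) * z ^ ij.2)) := by
  induction n generalizing α β with
  | zero => simp
  | succ n ih =>
    rw [sum_choose_mul_ascPochhammer_mul_pow_succ, ih (α + 1) β, ih α (β + 1),
      sum_choose_mul_ascPochhammer_shift_mul_pow_succ]

end CommSemiring

theorem ascPochhammer_eval_neg_natCast {R : Type*} [CommRing R] (n k : ℕ) :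
    (ascPochhammer R k).eval (-(n : R)) = (-1) ^ k * (k.factorial * n.choose k) := by
  rw [ascPochhammer_eval_neg_eq_descPochhammer, descPochhammer_eval_eq_descFactorial,
    Nat.descFactorial_eq_factorial_mul_choose, Nat.cast_mul]

section Field

variable {K : Type*} [Field K]

theorem neg_one_pow_mul_one_sub_div_pow_mul_pow_add (i j : ℕ) (w : K) {z : K} (hz : z ≠ 0) :
    (-1) ^ i * (1 - w / z) ^ i * z ^ (i + j) = (w - z) ^ i * z ^ j := by
  rw [pow_add, ← mul_assoc, ← mul_pow, ← mul_pow, mul_assoc, sub_mul, one_mul,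
    div_mul_cancel₀ _ hz, neg_one_mul, neg_sub]

theorem choose_mul_ascPochhammer_eq_hypergeometric_term (i j : ℕ) (α w : K) {γ z : K}
    (hz : z ≠ 0) (hi : (i.factorial : K) ≠ 0) (hγ : (ascPochhammer K i).eval γ ≠ 0) :
    ((i + j).choose i : K) * ((ascPochhammer K i).eval α * (w - z) ^ i *
        ((ascPochhammer K j).eval (γ + i) * z ^ j)) =
      z ^ (i + j) * (ascPochhammer K (i + j)).eval γ *
        ((ascPochhammer K i).eval (-((i + j : ℕ) : K)) * (ascPochhammer K i).eval α *
          (1 - w / z) ^ i / (i.factorial * (ascPochhammer K i).eval γ)) := by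
  set A := (ascPochhammer K i).eval α
  set C := ((i + j).choose i : K)
  set G := (ascPochhammer K i).eval γ
  set H := (ascPochhammer K j).eval (γ + i)
  calc C * (A * (w - z) ^ i * (H * z ^ j))
      = C * A * H * ((w - z) ^ i * z ^ j) := by ring
    _ = C * A * H * ((-1) ^ i * (1 - w / z) ^ i * z ^ (i + j)) := by
        rw [neg_one_pow_mul_one_sub_div_pow_mul_pow_add i j w hz]
    _ = z ^ (i + j) * (G * H) *
          ((-1) ^ i * (i.factorial * C) * A * (1 - w / z) ^ i / (i.factorial * G)) := by
        generalize 1 - w / z = x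
        field_simp
    _ = _ := by rw [ascPochhammer_add_eval, ascPochhammer_eval_neg_natCast]

theorem weighted_chu_vandermonde_general (n : ℕ) (α β w z : K) (hz : z ≠ 0)
    (hn : (n.factorial : K) ≠ 0) (hαβ : (ascPochhammer K n).eval (α + β) ≠ 0) :
    ∑ k ∈ range (n + 1),
        (n.choose k : K) * (ascPochhammer K k).eval α * w ^ k *
          (ascPochhammer K (n - k)).eval β * z ^ (n - k) =
      z ^ n * (ascPochhammer K n).eval (α + β) *
        ∑ k ∈ range (n + 1),
          (ascPochhammer K k).eval (-(n : K)) * (ascPochhammer K k).eval α *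
            (1 - w / z) ^ k / (k.factorial * (ascPochhammer K k).eval (α + β)) := by
  have expansion := sum_choose_mul_ascPochhammer_mul_add_pow n α β (w - z) z
  rw [sub_add_cancel, Nat.sum_antidiagonal_eq_sum_range_succ_mk,
    Nat.sum_antidiagonal_eq_sum_range_succ_mk] at expansion
  simp only [← mul_assoc] at expansion
  rw [expansion, mul_sum]
  refine sum_congr rfl fun k hk ↦ ?_
  obtain ⟨j, rfl⟩ := Nat.exists_eq_add_of_le (mem_range_succ_iff.mp hk)
  have hk_factorial : (k.factorial : K) ≠ 0 := fun h ↦ hn <| by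
    rw [← Nat.factorial_mul_ascFactorial, Nat.cast_mul, h, zero_mul]
  have hk_αβ : (ascPochhammer K k).eval (α + β) ≠ 0 :=
    left_ne_zero_of_mul (ascPochhammer_add_eval k j (α + β) ▸ hαβ)
  simpa only [add_tsub_cancel_left, ← mul_assoc] using
    choose_mul_ascPochhammer_eq_hypergeometric_term k j α w hz hk_factorial hk_αβ

end Field

theorem weighted_chu_vandermonde (n : ℕ) (α β w z : ℝ)
    (hα : 0 < α) (hβ : 0 < β) (hw : 0 < w) (hz : 0 < z) :
    ∑ k ∈ Finset.range (n + 1),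
        (n.choose k : ℝ) * (ascPochhammer ℝ k).eval α * w ^ k *
          (ascPochhammer ℝ (n - k)).eval β * z ^ (n - k) =
      z ^ n * (ascPochhammer ℝ n).eval (α + β) *
        ∑ k ∈ Finset.range (n + 1),
          (ascPochhammer ℝ k).eval (-(n : ℝ)) * (ascPochhammer ℝ k).eval α *
            (1 - w / z) ^ k /
            ((Nat.factorial k) * (ascPochhammer ℝ k).eval (α + β)) :=
  weighted_chu_vandermonde_general n α β w z hz.ne' (Nat.cast_ne_zero.2 n.factorial_ne_zero)
    (ascPochhammer_pos n (α + β) (add_pos hα hβ)).ne'
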